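/- Let h, k, k', m, n ∈ ℕ, let 𝒜 = {p_1, ..., p_k} be a set of integral polynomials, and let ℬ = {p'_1, ..., p'_{k'}} be a set of pairwise distinct nonzero integral polynomials. Then there exists N ∈ ℕ such that for every (m,n)-type colouring Δ of {1,...,N}, at least one of the following holds: (i) there exist a ∈ ℤ and d ≠ 0 such that {a, a+p_1(d), ..., a+p_k(d)} ⊆ {1,...,N} and this set is monochromatic with respect to Δ; or (ii) there exist a' ∈ ℤ and d' > h such that {a', a'+p'_1(d'), ..., a'+p'_{k'}(d')} ⊆ {1,...,N} and this set is fully-rainbow with respect to Δ. -/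

import Mathlib

open Polynomial

namespace CPV

open scoped Classical in
/-- leading coefficients of the members of degree `D` -/
noncomputable def cls {R : Type} [CommRing R] (B : Finset R[X]) (D : ℕ) : Finset R :=
  (B.filter (fun p => p.natDegree = D)).image leadingCoeff

theorem mem_cls {R : Type} [CommRing R] {B : Finset R[X]} {D : ℕ} {x : R} :
    x ∈ cls B D ↔ ∃ p ∈ B, p.natDegree = D ∧ p.leadingCoeff = x := by
  classical
  simp [cls, and_assoc]

open scoped Classical in
/-- PET weight -/
noncomputable def wt {R : Type} [CommRing R] (B : Finset R[X]) : ℕ →₀ ℕ :=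
  Finsupp.onFinset (B.image natDegree) (fun D => (cls B D).card) (by
    intro D hD
    have : (cls B D).Nonempty := Finset.card_pos.1 (Nat.pos_of_ne_zero hD)
    obtain ⟨x, hx⟩ := this
    obtain ⟨p, hp, h1, _⟩ := mem_cls.1 hx
    exact Finset.mem_image.2 ⟨p, hp, h1⟩)

theorem wt_apply {R : Type} [CommRing R] (B : Finset R[X]) (D : ℕ) :
    wt B D = (cls B D).card := rfl

def wlt (a b : ℕ →₀ ℕ) : Prop := Finsupp.Lex (· > ·) (· < ·) a b

theorem wlt_wf : WellFounded wlt :=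
  Finsupp.Lex.wellFounded' (fun _ => Nat.not_lt_zero _) Nat.lt_wfRel.wf Nat.lt_wfRel.wf

def Good {R : Type} [CommRing R] (B : Finset R[X]) : Prop := ∀ p ∈ B, p ≠ 0 ∧ p.eval 0 = 0

theorem good_natDegree {R : Type} [CommRing R] {p : R[X]} (h : p ≠ 0) (h0 : p.eval 0 = 0) :
    1 ≤ p.natDegree := by
  by_contra hc
  have h1 : p.natDegree = 0 := by omega
  rw [eq_C_of_natDegree_eq_zero h1] at h0 h
  simp at h0
  simp [h0] at h

/-- shifted polynomial `p(x+g) - p(g)` -/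
noncomputable def sh {R : Type} [CommRing R] (g : R) (p : R[X]) : R[X] :=
  taylor g p - C (p.eval g)

theorem sh_eval {R : Type} [CommRing R] (g x : R) (p : R[X]) :
    (sh g p).eval x = p.eval (x + g) - p.eval g := by
  simp [sh, taylor_eval]

theorem sh_natDegree {R : Type} [CommRing R] (g : R) (p : R[X]) :
    (sh g p).natDegree = p.natDegree := by
  simp [sh, natDegree_sub_C, natDegree_taylor]

theorem sh_coeff {R : Type} [CommRing R] (g : R) (p : R[X]) {k : ℕ} (hk : 1 ≤ k) :
    (sh g p).coeff k = (taylor g p).coeff k := by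
  rw [sh, coeff_sub, coeff_C, if_neg (by omega), sub_zero]

theorem sh_leadingCoeff {R : Type} [CommRing R] (g : R) {p : R[X]} (h : 1 ≤ p.natDegree) :
    (sh g p).leadingCoeff = p.leadingCoeff := by
  rw [leadingCoeff, sh_natDegree, sh_coeff g p h, coeff_taylor_natDegree]

theorem sh_inj {R : Type} [CommRing R] {g : R} {p q : R[X]} (hp : p.eval 0 = 0)
    (hq : q.eval 0 = 0) (h : sh g p = sh g q) : p = q := by
  have h1 : taylor g (p - q) = taylor g (C (p.eval g - q.eval g)) := by
    rw [map_sub, taylor_C]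
    simp only [sh] at h
    rw [C_sub]
    linear_combination h
  have h2 := taylor_injective g h1
  have h3 := congrArg (eval 0) h2
  simp only [eval_sub, hp, hq, eval_C] at h3
  rw [← h3] at h2
  simp at h2
  exact sub_eq_zero.1 h2

open scoped Classical in
/-- The PET-reduced family. -/
noncomputable def red {R : Type} [CommRing R] (B : Finset R[X]) (p1 : R[X]) (G : Finset R) :
    Finset R[X] :=
  (Finset.image₂ (fun p g => sh g p - p1) B G).erase 0

theorem mem_red {R : Type} [CommRing R] {B : Finset R[X]} {p1 : R[X]} {G : Finset R} {q : R[X]} :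
    q ∈ red B p1 G ↔ q ≠ 0 ∧ ∃ p ∈ B, ∃ g ∈ G, sh g p - p1 = q := by
  classical
  simp [red]

theorem red_good {R : Type} [CommRing R] {B : Finset R[X]} {p1 : R[X]} {G : Finset R}
    (h1 : p1.eval 0 = 0) : Good (red B p1 G) := by
  intro q hq
  obtain ⟨h, p, hp, g, hg, rfl⟩ := mem_red.1 hq
  refine ⟨h, ?_⟩
  simp [sh_eval, h1]

theorem red_wt {R : Type} [CommRing R] {B : Finset R[X]} {p1 : R[X]} {G : Finset R}
    (hB : Good B) (hp1 : p1 ∈ B) (hmin : ∀ p ∈ B, p1.natDegree ≤ p.natDegree)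
    (h0 : G.Nonempty) : wlt (wt (red B p1 G)) (wt B) := by
  classical
  have hd1 := good_natDegree (hB p1 hp1).1 (hB p1 hp1).2
  have big : ∀ p ∈ B, ∀ g, p1.natDegree < p.natDegree →
      (sh g p - p1).natDegree = p.natDegree ∧ (sh g p - p1).leadingCoeff = p.leadingCoeff := by
    intro p hp g hlt
    have h1 : p1.natDegree < (sh g p).natDegree := by rwa [sh_natDegree]
    refine ⟨?_, ?_⟩
    · rw [natDegree_sub_eq_left_of_natDegree_lt h1, sh_natDegree]
    · rw [leadingCoeff_sub_of_degree_lt (degree_lt_degree h1), sh_leadingCoeff g (by omega)]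
  have small : ∀ p ∈ B, ∀ g, p1.natDegree = p.natDegree →
      (sh g p - p1).natDegree ≤ p1.natDegree := by
    intro p hp g he
    refine (natDegree_sub_le _ _).trans ?_
    rw [sh_natDegree, he, max_self]
  refine ⟨p1.natDegree, ?_, ?_⟩
  · intro D hD
    change wt _ D = wt _ D
    rw [wt_apply, wt_apply]
    congr 1
    ext x
    rw [mem_cls, mem_cls]
    constructor
    · rintro ⟨q, hq, hqd, hqx⟩
      obtain ⟨hq0, p, hp, g, hg, rfl⟩ := mem_red.1 hq
      rcases (hmin p hp).lt_or_eq with hlt | he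
      · obtain ⟨h1, h2⟩ := big p hp g hlt
        exact ⟨p, hp, by rw [← h1, hqd], by rw [← h2, hqx]⟩
      · have := small p hp g he
        have hD' : D > p1.natDegree := hD
        omega
    · rintro ⟨p, hp, hpd, hpx⟩
      obtain ⟨g, hg⟩ := h0
      have hD' : D > p1.natDegree := hD
      obtain ⟨h1, h2⟩ := big p hp g (by omega)
      refine ⟨_, mem_red.2 ⟨?_, p, hp, g, hg, rfl⟩, by rw [h1, hpd], by rw [h2, hpx]⟩
      intro h
      rw [h] at h1
      simp at h1
      omega
  · change wt _ _ < wt _ _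
    rw [wt_apply, wt_apply]
    have hm : p1.leadingCoeff ∈ cls B p1.natDegree := mem_cls.2 ⟨p1, hp1, rfl, rfl⟩
    have hsub : cls (red B p1 G) p1.natDegree ⊆
        ((cls B p1.natDegree).erase p1.leadingCoeff).image (fun x => x - p1.leadingCoeff) := by
      intro x hx
      obtain ⟨q, hq, hqd, hqx⟩ := mem_cls.1 hx
      obtain ⟨hq0, p, hp, g, hg, rfl⟩ := mem_red.1 hq
      rcases (hmin p hp).lt_or_eq with hlt | he
      · obtain ⟨h1, h2⟩ := big p hp g hlt
        omega
      · have hc : (sh g p - p1).leadingCoeff = p.leadingCoeff - p1.leadingCoeff := by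
          rw [leadingCoeff, hqd, coeff_sub, sh_coeff g p hd1, he, coeff_taylor_natDegree,
            ← he, coeff_natDegree]
        refine Finset.mem_image.2 ⟨p.leadingCoeff, Finset.mem_erase.2 ⟨?_, ?_⟩, ?_⟩
        · intro h
          rw [h, sub_self, leadingCoeff_eq_zero] at hc
          exact hq0 hc
        · exact mem_cls.2 ⟨p, hp, he.symm, rfl⟩
        · rw [← hqx, hc]
    calc _ ≤ _ := Finset.card_le_card hsub
      _ ≤ _ := Finset.card_image_le
      _ < _ := Finset.card_erase_lt_of_mem hm

/-- The polynomial van der Waerden property. -/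
def PV (R : Type) [CommRing R] (B : Finset R[X]) : Prop :=
  ∀ (κ : Type) [Finite κ] (H : Finset R), ∃ S : Finset R, ∀ c : R → κ,
    ∃ a ∈ S, ∃ d ∈ S, d ∉ H ∧ ∀ p ∈ B, a + p.eval d ∈ S ∧ c (a + p.eval d) = c a

theorem pv_step {R : Type} [CommRing R] [Infinite R] {B : Finset R[X]} (hB : Good B)
    (IH : ∀ B' : Finset R[X], Good B' → wlt (wt B') (wt B) → PV R B') : PV R B := by
  classical
  intro κ _ H
  rcases B.eq_empty_or_nonempty with rfl | hne
  · obtain ⟨d, hd⟩ := Infinite.exists_notMem_finset H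
    exact ⟨{d}, fun c => ⟨d, by simp, d, by simp, hd, by simp⟩⟩
  obtain ⟨p1, hp1, hmin⟩ := Finset.exists_min_image B natDegree hne
  have key : ∀ r : ℕ, ∃ S : Finset R, ∀ c : R → κ,
      (∃ a ∈ S, ∃ d ∈ S, d ∉ H ∧ ∀ p ∈ B, a + p.eval d ∈ S ∧ c (a + p.eval d) = c a) ∨
      (∃ a ∈ S, ∃ K : Finset κ, K.card = r ∧ c a ∉ K ∧ ∀ k ∈ K, ∃ d ∈ S, d ∉ H ∧
        ∀ p ∈ B, a + p.eval d ∈ S ∧ c (a + p.eval d) = k) := by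
    intro r
    induction r with
    | zero => exact ⟨{0}, fun c => Or.inr ⟨0, by simp, ∅, by simp, by simp, by simp⟩⟩
    | succ r ih =>
      obtain ⟨S, hS⟩ := ih
      obtain ⟨T, hT⟩ := IH (red B p1 (insert 0 S)) (red_good (hB p1 hp1).2)
        (red_wt hB hp1 hmin (by simp)) (S → κ) (Finset.image₂ (fun h e => h - e) H (insert 0 S))
      refine ⟨S ∪ Finset.image₂ (· + ·) T S ∪ Finset.image₂ (· + ·) T (insert 0 S) ∪
        Finset.image₂ (fun x d => x - p1.eval d) (Finset.image₂ (· + ·) T S) T, fun c => ?_⟩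
      obtain ⟨b, hb, d, hd, hdH, hmono⟩ := hT (fun x w => c (x + w))
      have hwin : ∀ p ∈ B, ∀ e ∈ insert 0 S, ∀ w ∈ S,
          b + (p.eval (d + e) - p.eval e - p1.eval d) ∈ T ∧
          c (b + (p.eval (d + e) - p.eval e - p1.eval d) + w) = c (b + w) := by
        intro p hp e he w hw
        have hev : (sh e p - p1).eval d = p.eval (d + e) - p.eval e - p1.eval d := by
          simp [sh_eval]
        by_cases hz : sh e p - p1 = 0
        · rw [← hev, hz]
          simpa using hb
        · obtain ⟨h1, h2⟩ := hmono _ (mem_red.2 ⟨hz, p, hp, e, he, rfl⟩)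
          rw [hev] at h1 h2
          exact ⟨h1, congrFun h2 ⟨w, hw⟩⟩
      rcases hS (fun x => c (b + x)) with ⟨a, ha, f, hf, hfH, hm⟩ | ⟨a, ha, K, hK, haK, hm⟩
      · left
        refine ⟨b + a, ?_, f, ?_, hfH, fun p hp => ⟨?_, ?_⟩⟩
        · have := Finset.mem_image₂_of_mem (f := (· + ·)) hb ha
          simp only [Finset.mem_union]; tauto
        · simp only [Finset.mem_union]; tauto
        · have := Finset.mem_image₂_of_mem (f := (· + ·)) hb (hm p hp).1
          simp only [Finset.mem_union]
          rw [add_assoc]; tauto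
        · rw [add_assoc]; exact (hm p hp).2
      · have hK' : ∀ k ∈ insert (c (b + a)) K, ∃ e ∈ insert 0 S,
            ∀ p ∈ B, a + p.eval e ∈ S ∧ c (b + (a + p.eval e)) = k := by
          intro k hk
          rcases Finset.mem_insert.1 hk with rfl | hk
          · refine ⟨0, by simp, fun p hp => ?_⟩
            rw [(hB p hp).2]; simpa using ha
          · obtain ⟨e, he, _, h⟩ := hm k hk
            exact ⟨e, by simp [he], h⟩
        have hfam : ∀ k ∈ insert (c (b + a)) K, ∃ e ∈ (S ∪ Finset.image₂ (· + ·) T S ∪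
            Finset.image₂ (· + ·) T (insert 0 S) ∪
            Finset.image₂ (fun x d => x - p1.eval d) (Finset.image₂ (· + ·) T S) T),
            e ∉ H ∧ ∀ p ∈ B, (b + a - p1.eval d) + p.eval e ∈ (S ∪ Finset.image₂ (· + ·) T S ∪
            Finset.image₂ (· + ·) T (insert 0 S) ∪
            Finset.image₂ (fun x d => x - p1.eval d) (Finset.image₂ (· + ·) T S) T) ∧
            c ((b + a - p1.eval d) + p.eval e) = k := by
          intro k hk
          obtain ⟨e, he, h⟩ := hK' k hk
          refine ⟨d + e, ?_, ?_, fun p hp => ?_⟩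
          · have := Finset.mem_image₂_of_mem (f := (· + ·)) hd he
            simp only [Finset.mem_union]; tauto
          · intro hH
            exact hdH (Finset.mem_image₂.2 ⟨d + e, hH, e, he, by ring⟩)
          · obtain ⟨h1, h2⟩ := hwin p hp e he _ (h p hp).1
            have heq : b + a - p1.eval d + p.eval (d + e) =
                b + (p.eval (d + e) - p.eval e - p1.eval d) + (a + p.eval e) := by ring
            rw [heq]
            refine ⟨?_, by rw [h2, (h p hp).2]⟩
            have := Finset.mem_image₂_of_mem (f := (· + ·)) h1 (h p hp).1
            simp only [Finset.mem_union]; tauto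
        have hamem : b + a - p1.eval d ∈ (S ∪ Finset.image₂ (· + ·) T S ∪
            Finset.image₂ (· + ·) T (insert 0 S) ∪
            Finset.image₂ (fun x d => x - p1.eval d) (Finset.image₂ (· + ·) T S) T) := by
          have := Finset.mem_image₂_of_mem (f := fun x d => x - p1.eval d)
            (Finset.mem_image₂_of_mem (f := (· + ·)) hb ha) hd
          simp only [Finset.mem_union]; tauto
        by_cases hc : c (b + a - p1.eval d) ∈ insert (c (b + a)) K
        · left
          obtain ⟨e, he, heH, h⟩ := hfam _ hc
          exact ⟨_, hamem, e, he, heH, h⟩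
        · right
          refine ⟨_, hamem, insert (c (b + a)) K, ?_, hc, hfam⟩
          rw [Finset.card_insert_of_notMem haK, hK]
  have := Fintype.ofFinite κ
  obtain ⟨S, hS⟩ := key (Fintype.card κ + 1)
  refine ⟨S, fun c => (hS c).resolve_right ?_⟩
  rintro ⟨a, _, K, hK, _⟩
  have := K.card_le_univ
  omega

theorem pv_good {R : Type} [CommRing R] [Infinite R] (B : Finset R[X]) (hB : Good B) : PV R B := by
  have : ∀ w : ℕ →₀ ℕ, ∀ B : Finset R[X], Good B → wt B = w → PV R B := by
    intro w
    induction w using wlt_wf.induction with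
    | _ w ih =>
      rintro B hB rfl
      exact pv_step hB fun B' hB' hlt => ih _ hlt B' hB' rfl
  exact this _ B hB rfl

theorem pv {R : Type} [CommRing R] [Infinite R] (B : Finset R[X]) (hB : ∀ p ∈ B, p.eval 0 = 0) :
    PV R B := by
  classical
  intro κ _ H
  obtain ⟨S, hS⟩ := pv_good (B.erase 0)
    (fun p hp => ⟨Finset.ne_of_mem_erase hp, hB p (Finset.mem_of_mem_erase hp)⟩) κ H
  refine ⟨S, fun c => ?_⟩
  obtain ⟨a, ha, d, hd, hdH, h⟩ := hS c
  refine ⟨a, ha, d, hd, hdH, fun p hp => ?_⟩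
  by_cases hp0 : p = 0
  · subst hp0; simpa using ha
  · exact h p (Finset.mem_erase.2 ⟨hp0, hp⟩)

/-- conclusion (i) -/
def MonoA {R : Type} [CommRing R] {ι : Type} (A : Finset R[X]) (S : Finset R)
    (Δ : R → ι → ℕ) : Prop :=
  ∃ a ∈ S, ∃ d ∈ S, d ≠ 0 ∧ ∃ j, ∀ p ∈ A, a + p.eval d ∈ S ∧ Δ (a + p.eval d) j = Δ a j

theorem MonoA.mono {R : Type} [CommRing R] {ι : Type} {A : Finset R[X]} {S S' : Finset R}
    {Δ : R → ι → ℕ} (h : MonoA A S Δ) (hs : S ⊆ S') : MonoA A S' Δ := by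
  obtain ⟨a, ha, d, hd, h0, j, hj⟩ := h
  exact ⟨a, hs ha, d, hs hd, h0, j, fun p hp => ⟨hs (hj p hp).1, (hj p hp).2⟩⟩

/-- conclusion (ii) -/
def RainB {R : Type} [CommRing R] {ι κ : Type} (B : Finset R[X]) (H S : Finset R)
    (Δ : R → ι → ℕ) (c : R → κ) : Prop :=
  ∃ a ∈ S, ∃ d ∈ S, d ∉ H ∧ (∀ p ∈ B, a + p.eval d ∈ S ∧ c (a + p.eval d) = c a) ∧
    (∀ p ∈ B, ∀ j j', Δ (a + p.eval d) j ≠ Δ a j') ∧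
    (∀ p ∈ B, ∀ q ∈ B, p ≠ q → ∀ j j', Δ (a + p.eval d) j ≠ Δ (a + q.eval d) j')

def CanN (R : Type) [CommRing R] (B : Finset R[X]) : Prop :=
  ∀ (ι κ : Type) [Finite ι] [Finite κ] (A : Finset R[X]) (_ : ∀ p ∈ A, p.eval 0 = 0)
    (H : Finset R), ∃ S : Finset R, ∀ (Δ : R → ι → ℕ) (c : R → κ),
      MonoA A S Δ ∨ RainB B H S Δ c

def Can1 (R : Type) [CommRing R] (B : Finset R[X]) : Prop :=
  ∀ (ι : Type) [Finite ι] (A : Finset R[X]) (_ : ∀ p ∈ A, p.eval 0 = 0)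
    (H : Finset R), ∃ S : Finset R, ∀ (Δ : R → ι → ℕ),
      MonoA A S Δ ∨ RainB B H S Δ (fun _ => ())

theorem lin_eq {R : Type} [CommRing R] {p : R[X]} (h0 : p.eval 0 = 0) (h : p.natDegree ≤ 1) :
    p = C (p.coeff 1) * X := by
  have h1 := eq_X_add_C_of_natDegree_le_one h
  have h2 : p.coeff 0 = 0 := by rw [coeff_zero_eq_eval_zero, h0]
  rw [h2] at h1
  simpa using h1

theorem bad_finite {R : Type} [CommRing R] [IsDomain R] [CharZero R] (q r : R[X])
    (hq : 2 ≤ q.natDegree) : {g : R | r = sh g q}.Finite := by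
  classical
  have hne : derivative q - C (r.coeff 1) ≠ 0 := by
    intro h
    have h1 : (derivative q).natDegree = q.natDegree - 1 := natDegree_derivative q
    have h2 : derivative q = C (r.coeff 1) := sub_eq_zero.1 h
    rw [h2, natDegree_C] at h1
    omega
  refine (derivative q - C (r.coeff 1)).roots.toFinset.finite_toSet.subset ?_
  intro g hg
  have hg' : r = sh g q := hg
  simp only [Finset.mem_coe, Multiset.mem_toFinset, mem_roots hne, IsRoot.def, eval_sub, eval_C]
  rw [hg', sh_coeff g q le_rfl, taylor_coeff_one, sub_self]

/-- Greedy choice of pairwise compatible shifts. -/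
theorem greedy {R : Type} [CommRing R] [IsDomain R] [CharZero R] {B : Finset R[X]} (hB : Good B)
    (ι : Type) [Finite ι] (A : Finset R[X]) (hA : ∀ p ∈ A, p.eval 0 = 0) (t : ℕ) :
    ∃ G W : Finset R, ∀ Δ : R → ι → ℕ, MonoA A W Δ ∨ ∃ Γ : Finset R, Γ ⊆ G ∧ Γ.card = t ∧
      ∀ g ∈ Γ, ∀ g' ∈ Γ, g ≠ g' → ∀ p ∈ B, ∀ q ∈ B, sh g p = sh g' q →
        ∀ j j', Δ (p.eval g) j ≠ Δ (q.eval g') j' := by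
  classical
  induction t with
  | zero => exact ⟨∅, ∅, fun Δ => Or.inr ⟨∅, by simp, by simp, by simp⟩⟩
  | succ t ih =>
    obtain ⟨G, W, hGW⟩ := ih
    set Lin := B.filter (fun p => p.natDegree = 1) with hLin
    have hlin : ∀ s ∈ Lin, s ∈ B ∧ s.natDegree = 1 ∧ s.coeff 1 ≠ 0 ∧
        ∀ x, s.eval x = s.coeff 1 * x := by
      intro s hs
      obtain ⟨h1, h2⟩ := Finset.mem_filter.1 hs
      refine ⟨h1, h2, ?_, fun x => ?_⟩
      · have := leadingCoeff_ne_zero.2 (hB s h1).1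
        rwa [leadingCoeff, h2] at this
      · conv_lhs => rw [lin_eq (hB s h1).2 h2.le]
        simp
    set E : R := ∏ s ∈ Lin, s.coeff 1 with hE
    have hE0 : E ≠ 0 := Finset.prod_ne_zero_iff.2 fun s hs => (hlin s hs).2.2.1
    set F : R[X] → R[X] → R[X] := fun s p =>
      C (∏ s' ∈ Lin.erase s, s'.coeff 1) * X * (divX p).comp (C E * X) with hF
    have hFe : ∀ s ∈ Lin, ∀ p ∈ A, ∀ f, s.coeff 1 * (F s p).eval f = p.eval (E * f) := by
      intro s hs p hp f
      have h1 : s.coeff 1 * ∏ s' ∈ Lin.erase s, s'.coeff 1 = E :=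
        Finset.mul_prod_erase Lin (fun s => s.coeff 1) hs
      have h2 : p.eval (E * f) = E * f * (divX p).eval (E * f) := by
        conv_lhs => rw [← divX_mul_X_add p]
        rw [coeff_zero_eq_eval_zero, hA p hp]
        simp [mul_comm]
      rw [h2, hF]
      simp only [eval_mul, eval_C, eval_X, eval_comp]
      rw [← mul_assoc, ← mul_assoc, h1]
    obtain ⟨T, hT⟩ := pv (Finset.image₂ F Lin A) (by
      intro p hp
      obtain ⟨s, _, p, _, rfl⟩ := Finset.mem_image₂.1 hp
      simp [hF]) (Option (Lin × G × ι × ι)) {0}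
    -- bad shifts
    have hbad : (⋃ q ∈ (B.filter (fun q => 2 ≤ q.natDegree)), ⋃ p ∈ B, ⋃ g ∈ G,
        {g' : R | sh g p = sh g' q}).Finite := by
      refine Set.Finite.biUnion (Finset.finite_toSet _) fun q hq => ?_
      refine Set.Finite.biUnion (Finset.finite_toSet _) fun p hp => ?_
      refine Set.Finite.biUnion (Finset.finite_toSet _) fun g hg => ?_
      exact bad_finite q _ (Finset.mem_filter.1 hq).2
    obtain ⟨y, hy⟩ := Infinite.exists_notMem_finset
      (Finset.image₂ (fun b x => b - x) (hbad.toFinset ∪ G) T)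
    have hy1 : ∀ x ∈ T, y + x ∉ G := fun x hx h => hy <|
      Finset.mem_image₂.2 ⟨y + x, Finset.mem_union_right _ h, x, hx, by ring⟩
    have hy2 : ∀ x ∈ T, ∀ g ∈ G, ∀ p ∈ B, ∀ q ∈ B, sh g p = sh (y + x) q → q.natDegree = 1 := by
      intro x hx g hg p hp q hq h
      by_contra hne
      have h1 := good_natDegree (hB q hq).1 (hB q hq).2
      refine hy (Finset.mem_image₂.2 ⟨y + x, Finset.mem_union_left _ ?_, x, hx, by ring⟩)
      rw [Set.Finite.mem_toFinset]
      simp only [Set.mem_iUnion]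
      exact ⟨q, Finset.mem_filter.2 ⟨hq, by omega⟩, p, hp, g, hg, h⟩
    refine ⟨G ∪ T.image (fun x => y + x), W ∪ Finset.image₂ (fun s x => s.coeff 1 * (y + x)) Lin T
      ∪ T.image (fun f => E * f), fun Δ => ?_⟩
    rcases hGW Δ with h | ⟨Γ, hΓG, hΓt, hΓ⟩
    · exact Or.inl (h.mono (fun x hx => by simp only [Finset.mem_union]; tauto))
    by_cases hgood : ∃ x ∈ T, ∀ g ∈ Γ, ∀ s ∈ Lin, ∀ j j',
        Δ (s.coeff 1 * g) j ≠ Δ (s.coeff 1 * (y + x)) j'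
    · right
      obtain ⟨x, hx, hxg⟩ := hgood
      have hnew : ∀ g ∈ Γ, ∀ p ∈ B, ∀ q ∈ B, sh g p = sh (y + x) q →
          ∀ j j', Δ (p.eval g) j ≠ Δ (q.eval (y + x)) j' := by
        intro g hg p hp q hq h j j'
        have hq1 := hy2 x hx g (hΓG hg) p hp q hq h
        have hp1 : p.natDegree = 1 := by
          rw [← sh_natDegree g p, h, sh_natDegree, hq1]
        have hpL : p ∈ Lin := Finset.mem_filter.2 ⟨hp, hp1⟩
        have hqL : q ∈ Lin := Finset.mem_filter.2 ⟨hq, hq1⟩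
        have hlc : p.coeff 1 = q.coeff 1 := by
          have := congrArg leadingCoeff h
          rw [sh_leadingCoeff _ hp1.ge, sh_leadingCoeff _ hq1.ge, leadingCoeff, leadingCoeff,
            hp1, hq1] at this
          exact this
        rw [(hlin p hpL).2.2.2, (hlin q hqL).2.2.2, hlc]
        exact hxg g hg q hqL j j'
      refine ⟨insert (y + x) Γ, ?_, ?_, ?_⟩
      · intro z hz
        rcases Finset.mem_insert.1 hz with rfl | hz
        · exact Finset.mem_union_right _ (Finset.mem_image_of_mem _ hx)
        · exact Finset.mem_union_left _ (hΓG hz)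
      · rw [Finset.card_insert_of_notMem (fun h => hy1 x hx (hΓG h)), hΓt]
      · intro g hg g' hg' hne p hp q hq h j j'
        rcases Finset.mem_insert.1 hg with rfl | hg
        · rcases Finset.mem_insert.1 hg' with rfl | hg'
          · exact absurd rfl hne
          · exact (hnew g' hg' q hq p hp h.symm j' j).symm
        · rcases Finset.mem_insert.1 hg' with rfl | hg'
          · exact hnew g hg p hp q hq h j j'
          · exact hΓ g hg g' hg' hne p hp q hq h j j'
    · left
      push Not at hgood
      have hch : ∀ x : R, ∃ o : Option (Lin × G × ι × ι), x ∈ T →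
          ∃ s g j j', o = some (s, g, j, j') ∧
            Δ (s.1.coeff 1 * g.1) j = Δ (s.1.coeff 1 * (y + x)) j' := by
        intro x
        by_cases hx : x ∈ T
        · obtain ⟨g, hg, s, hs, j, j', h⟩ := hgood x hx
          exact ⟨some (⟨s, hs⟩, ⟨g, hΓG hg⟩, j, j'), fun _ => ⟨_, _, _, _, rfl, h⟩⟩
        · exact ⟨none, fun h => absurd h hx⟩
      choose c hc using hch
      obtain ⟨x, hx, f, hf, hf0, hm⟩ := hT c
      obtain ⟨s, g, j, j', ho, hΔ⟩ := hc x hx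
      refine ⟨s.1.coeff 1 * (y + x), ?_, E * f, ?_, ?_, j', ?_⟩
      · have := Finset.mem_image₂_of_mem (f := fun (s : R[X]) x => s.coeff 1 * (y + x)) s.2 hx
        simp only [Finset.mem_union]; tauto
      · have := Finset.mem_image_of_mem (fun f => E * f) hf
        simp only [Finset.mem_union]; tauto
      · exact mul_ne_zero hE0 (by simpa using hf0)
      · intro p hp
        obtain ⟨h1, h2⟩ := hm (F s.1 p) (Finset.mem_image₂_of_mem s.2 hp)
        have heq : s.1.coeff 1 * (y + x) + p.eval (E * f) =
            s.1.coeff 1 * (y + (x + (F s.1 p).eval f)) := by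
          rw [← hFe s.1 s.2 p hp f]; ring
        rw [heq]
        constructor
        · have := Finset.mem_image₂_of_mem (f := fun (s : R[X]) x => s.coeff 1 * (y + x)) s.2 h1
          simp only [Finset.mem_union]; tauto
        · obtain ⟨s2, g2, j2, j2', ho2, hΔ2⟩ := hc _ h1
          rw [h2, ho] at ho2
          simp only [Option.some.injEq, Prod.mk.injEq] at ho2
          obtain ⟨rfl, rfl, rfl, rfl⟩ := ho2
          rw [← hΔ2, hΔ]

theorem step1 {R : Type} [CommRing R] [IsDomain R] [CharZero R] {B : Finset R[X]} (hB : Good B)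
    (IH : ∀ B' : Finset R[X], Good B' → wlt (wt B') (wt B) → CanN R B') : Can1 R B := by
  classical
  intro ι _ A hA H
  rcases B.eq_empty_or_nonempty with rfl | hne
  · obtain ⟨d, hd⟩ := Infinite.exists_notMem_finset H
    exact ⟨{d}, fun c => Or.inr ⟨d, by simp, d, by simp, hd, by simp, by simp, by simp⟩⟩
  obtain ⟨p1, hp1, hmin⟩ := Finset.exists_min_image B natDegree hne
  have := Fintype.ofFinite ι
  obtain ⟨G, W, hGW⟩ := greedy hB ι A hA (Fintype.card ι + 1)
  set V : Finset R := Finset.image₂ (fun p g => p.eval g) B G ∪ W with hV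
  obtain ⟨T, hT⟩ := IH (red B p1 (insert 0 G)) (red_good (hB p1 hp1).2)
    (red_wt hB hp1 hmin (by simp)) (V × ι) (V × ι → V × ι → Prop) A hA
    (Finset.image₂ (fun h g => h - g) H G)
  set S : Finset R := T ∪ W ∪ Finset.image₂ (· + ·) T V ∪ Finset.image₂ (· + ·) T G ∪
    Finset.image₂ (fun b d => b - p1.eval d) T T with hS
  have hTV : ∀ x ∈ T, ∀ w ∈ V, x + w ∈ S := by
    intro x hx w hw
    have := Finset.mem_image₂_of_mem (f := (· + ·)) hx hw
    simp only [hS, Finset.mem_union]; tauto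
  have hTS : T ⊆ S := fun x hx => by simp only [hS, Finset.mem_union]; tauto
  have hWS : W ⊆ S := fun x hx => by simp only [hS, Finset.mem_union]; tauto
  have hWV : W ⊆ V := Finset.subset_union_right
  refine ⟨S, fun Δ => ?_⟩
  rcases hT (fun x wj => Δ (x + wj.1.1) wj.2)
    (fun x u v => Δ (x + u.1.1) u.2 = Δ (x + v.1.1) v.2) with h | h
  · left
    obtain ⟨a, ha, d, hd, hd0, ⟨w, j⟩, hj⟩ := h
    refine ⟨a + w.1, hTV a ha _ w.2, d, hTS hd, hd0, j, fun p hp => ?_⟩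
    have heq : a + w.1 + p.eval d = a + p.eval d + w.1 := by ring
    rw [heq]
    exact ⟨hTV _ (hj p hp).1 _ w.2, (hj p hp).2⟩
  obtain ⟨b, hb, d, hd, hdH, hpat, hr1, hr2⟩ := h
  rcases hGW (fun x => Δ (b + x)) with h | ⟨Γ, hΓG, hΓc, hΓ⟩
  · left
    obtain ⟨a, ha, e, he, he0, j, hj⟩ := h
    refine ⟨b + a, hTV b hb _ (hWV ha), e, hWS he, he0, j, fun p hp => ?_⟩
    rw [add_assoc]
    exact ⟨hTV b hb _ (hWV (hj p hp).1), (hj p hp).2⟩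
  right
  have hGV : ∀ p ∈ B, ∀ g ∈ Γ, p.eval g ∈ V := fun p hp g hg =>
    Finset.mem_union_left _ (Finset.mem_image₂_of_mem hp (hΓG hg))
  -- the windows
  have hmemT : ∀ p ∈ B, ∀ g ∈ Γ, b + (sh g p - p1).eval d ∈ T := by
    intro p hp g hg
    by_cases hz : sh g p - p1 = 0
    · rw [hz]; simpa using hb
    · exact (hpat _ (mem_red.2 ⟨hz, p, hp, g, by simp [hΓG hg], rfl⟩)).1
  have hpatt : ∀ p ∈ B, ∀ g ∈ Γ, ∀ u ∈ V, ∀ v ∈ V, ∀ j j',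
      (Δ (b + (sh g p - p1).eval d + u) j = Δ (b + (sh g p - p1).eval d + v) j' ↔
        Δ (b + u) j = Δ (b + v) j') := by
    intro p hp g hg u hu v hv j j'
    by_cases hz : sh g p - p1 = 0
    · rw [hz]; simp
    · have := (hpat _ (mem_red.2 ⟨hz, p, hp, g, by simp [hΓG hg], rfl⟩)).2
      exact iff_of_eq (congrFun (congrFun this (⟨u, hu⟩, j)) (⟨v, hv⟩, j'))
  have hrain : ∀ p ∈ B, ∀ g ∈ Γ, ∀ p' ∈ B, ∀ g' ∈ Γ, sh g p ≠ sh g' p' → ∀ u ∈ V, ∀ v ∈ V,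
      ∀ j j', Δ (b + (sh g p - p1).eval d + u) j ≠ Δ (b + (sh g' p' - p1).eval d + v) j' := by
    intro p hp g hg p' hp' g' hg' hne u hu v hv j j'
    by_cases hz : sh g p - p1 = 0
    · by_cases hz' : sh g' p' - p1 = 0
      · exact absurd (by rw [sub_eq_zero.1 hz, sub_eq_zero.1 hz']) hne
      · have := hr1 _ (mem_red.2 ⟨hz', p', hp', g', by simp [hΓG hg'], rfl⟩) (⟨v, hv⟩, j')
          (⟨u, hu⟩, j)
        rw [hz]
        simpa using this.symm
    · by_cases hz' : sh g' p' - p1 = 0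
      · have := hr1 _ (mem_red.2 ⟨hz, p, hp, g, by simp [hΓG hg], rfl⟩) (⟨u, hu⟩, j)
          (⟨v, hv⟩, j')
        rw [hz']
        simpa using this
      · exact hr2 _ (mem_red.2 ⟨hz, p, hp, g, by simp [hΓG hg], rfl⟩)
          _ (mem_red.2 ⟨hz', p', hp', g', by simp [hΓG hg'], rfl⟩)
          (fun h => hne (sub_left_injective h)) (⟨u, hu⟩, j) (⟨v, hv⟩, j')
  have hx : ∀ p g, b - p1.eval d + p.eval (d + g) =
      b + (sh g p - p1).eval d + p.eval g := by
    intro p g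
    rw [eval_sub, sh_eval]; ring
  have hdisj : ∀ p ∈ B, ∀ g ∈ Γ, ∀ p' ∈ B, ∀ g' ∈ Γ, (p ≠ p' ∨ g ≠ g') → ∀ j j',
      Δ (b - p1.eval d + p.eval (d + g)) j ≠ Δ (b - p1.eval d + p'.eval (d + g')) j' := by
    intro p hp g hg p' hp' g' hg' hne j j'
    rw [hx, hx]
    by_cases hsh : sh g p = sh g' p'
    · by_cases hgg : g = g'
      · subst hgg
        have := sh_inj (hB p hp).2 (hB p' hp').2 hsh
        tauto
      · rw [← hsh]
        intro h
        exact hΓ g hg g' hg' hgg p hp p' hp' hsh j j'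
          ((hpatt p hp g hg _ (hGV p hp g hg) _ (hGV p' hp' g' hg') j j').1 h)
    · exact hrain p hp g hg p' hp' g' hg' hsh _ (hGV p hp g hg) _ (hGV p' hp' g' hg') j j'
  have hex : ∃ g ∈ Γ, ∀ p ∈ B, ∀ j j',
      Δ (b - p1.eval d + p.eval (d + g)) j ≠ Δ (b - p1.eval d) j' := by
    by_contra hcon
    push Not at hcon
    have hch : ∀ g : Γ, ∃ j', ∃ p ∈ B, ∃ j,
        Δ (b - p1.eval d + p.eval (d + g.1)) j = Δ (b - p1.eval d) j' := by
      intro g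
      obtain ⟨p, hp, j, j', h⟩ := hcon g.1 g.2
      exact ⟨j', p, hp, j, h⟩
    choose f hf using hch
    obtain ⟨g, g', hne, hgg⟩ := Fintype.exists_ne_map_eq_of_card_lt f (by
      rw [Fintype.card_coe, hΓc]; omega)
    obtain ⟨p, hp, j, h⟩ := hf g
    obtain ⟨p', hp', j', h'⟩ := hf g'
    refine hdisj p hp g.1 g.2 p' hp' g'.1 g'.2 (Or.inr fun h => hne (Subtype.ext h)) j j' ?_
    rw [h, h', hgg]
  obtain ⟨g, hg, hun⟩ := hex
  refine ⟨b - p1.eval d, ?_, d + g, ?_, ?_, ?_, hun, ?_⟩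
  · have := Finset.mem_image₂_of_mem (f := fun b d => b - p1.eval d) hb hd
    simp only [hS, Finset.mem_union]; tauto
  · have := Finset.mem_image₂_of_mem (f := (· + ·)) hd (hΓG hg)
    simp only [hS, Finset.mem_union]; tauto
  · intro hh
    exact hdH (Finset.mem_image₂.2 ⟨d + g, hh, g, hΓG hg, by ring⟩)
  · intro p hp
    rw [hx]
    exact ⟨hTV _ (hmemT p hp g hg) _ (hGV p hp g hg), rfl⟩
  · intro p hp q hq hpq
    exact hdisj p hp g hg q hq g hg (Or.inl hpq)

/-- lift of a polynomial over `R` to one over `R[X]`: `p(X x)`. -/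
noncomputable def hat {R : Type} [CommRing R] (p : R[X]) : R[X][X] :=
  (p.map C).comp (C X * X)

theorem hat_eval {R : Type} [CommRing R] (p v : R[X]) (l : R) :
    ((hat p).eval v).eval l = p.eval (l * v.eval l) := by
  rw [hat, eval_comp, eval_mul, eval_C, eval_X, eval_map, ← coe_evalRingHom, hom_eval₂]
  have : (evalRingHom l).comp (C : R →+* R[X]) = RingHom.id R := by ext; simp
  rw [this]
  simp [eval₂_id]

theorem natDegree_CXX {R : Type} [CommRing R] [IsDomain R] :
    (C (X : R[X]) * X : R[X][X]).natDegree = 1 := natDegree_C_mul_X _ X_ne_zero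

theorem hat_natDegree {R : Type} [CommRing R] [IsDomain R] (p : R[X]) :
    (hat p).natDegree = p.natDegree := by
  rw [hat, natDegree_comp, natDegree_CXX, natDegree_map_eq_of_injective C_injective, mul_one]

theorem hat_leadingCoeff {R : Type} [CommRing R] [IsDomain R] (p : R[X]) :
    (hat p).leadingCoeff = C p.leadingCoeff * X ^ p.natDegree := by
  rw [hat, leadingCoeff_comp (by rw [natDegree_CXX]; omega),
    leadingCoeff_map_of_injective C_injective, natDegree_map_eq_of_injective C_injective]
  simp

theorem hat_inj {R : Type} [CommRing R] [IsDomain R] : Function.Injective (hat (R := R)) := by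
  intro p q h
  have hs : hat (p - q) = 0 := by
    have : hat (p - q) = hat p - hat q := by simp [hat]
    rw [this, h, sub_self]
  have := hat_leadingCoeff (p - q)
  rw [hs, leadingCoeff_zero] at this
  have h2 := mul_eq_zero.1 this.symm
  have h3 := h2.resolve_right (pow_ne_zero _ X_ne_zero)
  rw [C_eq_zero, leadingCoeff_eq_zero] at h3
  exact sub_eq_zero.1 h3

theorem hat_eval_zero {R : Type} [CommRing R] {p : R[X]} (h : p.eval 0 = 0) :
    (hat p).eval 0 = 0 := by
  rw [hat, eval_comp]
  simp only [eval_mul, eval_X, mul_zero, eval_map]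
  rw [← C_0, eval₂_at_apply, h]

open scoped Classical in
theorem hat_good {R : Type} [CommRing R] [IsDomain R] {B : Finset R[X]} (h : Good B) :
    Good (B.image hat) := by
  intro q hq
  obtain ⟨p, hp, rfl⟩ := Finset.mem_image.1 hq
  refine ⟨fun h0 => (h p hp).1 (hat_inj ?_), hat_eval_zero (h p hp).2⟩
  rw [h0]; simp [hat]

open scoped Classical in
theorem hat_wt {R : Type} [CommRing R] [IsDomain R] (B : Finset R[X]) :
    wt (B.image hat) = wt B := by
  ext D
  rw [wt_apply, wt_apply]
  have : cls (B.image hat) D = (cls B D).image (fun c => C c * X ^ D) := by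
    ext x
    simp only [mem_cls, Finset.mem_image]
    constructor
    · rintro ⟨_, ⟨p, hp, rfl⟩, h1, h2⟩
      rw [hat_natDegree] at h1
      rw [hat_leadingCoeff, h1] at h2
      exact ⟨_, ⟨p, hp, h1, rfl⟩, h2⟩
    · rintro ⟨_, ⟨p, hp, h1, rfl⟩, h2⟩
      refine ⟨_, ⟨p, hp, rfl⟩, by rw [hat_natDegree, h1], by rw [hat_leadingCoeff, h1, h2]⟩
  rw [this]
  apply Finset.card_image_of_injective
  intro x y h
  exact C_injective (mul_right_cancel₀ (pow_ne_zero _ X_ne_zero) h)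

open scoped Classical in
theorem step2 {R : Type} [CommRing R] [IsDomain R] [CharZero R] {B : Finset R[X]} (hB : Good B)
    (h1 : Can1 R[X] (B.image hat)) : CanN R B := by
  intro ι κ _ _ A hA H
  obtain ⟨S', hS'⟩ := h1 ι (A.image hat) (by
    intro q hq
    obtain ⟨p, hp, rfl⟩ := Finset.mem_image.1 hq
    exact hat_eval_zero (hA p hp)) {0}
  obtain ⟨T, hT⟩ := pv (S'.image (fun u => u - C (u.eval 0))) (by
    intro q hq
    obtain ⟨p, hp, rfl⟩ := Finset.mem_image.1 hq
    simp) κ (S'.biUnion fun v => (insert 0 H).biUnion fun h => (X * v - C h).roots.toFinset)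
  refine ⟨T ∪ Finset.image₂ (fun l v => l * v.eval l) T S', fun Δ c => ?_⟩
  obtain ⟨a0, ha0, l, hl, hlH, hm⟩ := hT c
  have hTm : ∀ u ∈ S', a0 + (u.eval l - u.eval 0) ∈ T ∧ c (a0 + (u.eval l - u.eval 0)) = c a0 := by
    intro u hu
    have := hm _ (Finset.mem_image_of_mem _ hu)
    simpa using this
  have hdv : ∀ v ∈ S', v ≠ 0 → ∀ h ∈ insert 0 H, l * v.eval l ≠ h := by
    intro v hv hv0 h hh he
    apply hlH
    refine Finset.mem_biUnion.2 ⟨v, hv, Finset.mem_biUnion.2 ⟨h, hh, ?_⟩⟩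
    rw [Multiset.mem_toFinset, mem_roots]
    · simp [he]
    · intro h0
      have h2 : (X * v).natDegree = v.natDegree + 1 := natDegree_X_mul hv0
      rw [sub_eq_zero.1 h0, natDegree_C] at h2
      omega
  have hph : ∀ (u v p : R[X]), p.eval 0 = 0 →
      a0 + ((u + (hat p).eval v).eval l - (u + (hat p).eval v).eval 0) =
        a0 + (u.eval l - u.eval 0) + p.eval (l * v.eval l) := by
    intro u v p hp
    rw [eval_add, eval_add, hat_eval, hat_eval, zero_mul, hp]
    ring
  have hTS : ∀ x ∈ T, x ∈ T ∪ Finset.image₂ (fun l v => l * v.eval l) T S' :=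
    fun x hx => Finset.mem_union_left _ hx
  have hdS : ∀ v ∈ S', l * v.eval l ∈ T ∪ Finset.image₂ (fun l v => l * v.eval l) T S' :=
    fun v hv => Finset.mem_union_right _ (Finset.mem_image₂_of_mem hl hv)
  rcases hS' (fun u => Δ (a0 + (u.eval l - u.eval 0))) with
    ⟨u, hu, v, hv, hv0, j, hj⟩ | ⟨u, hu, v, hv, hv0, hc, hr1, hr2⟩
  · left
    refine ⟨_, hTS _ (hTm u hu).1, _, hdS v hv, hdv v hv hv0 0 (by simp), j, fun p hp => ?_⟩
    obtain ⟨h2, h3⟩ := hj _ (Finset.mem_image_of_mem hat hp)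
    simp only [hph u v p (hA p hp)] at h3
    have h4 := (hTm _ h2).1
    rw [hph u v p (hA p hp)] at h4
    exact ⟨hTS _ h4, h3⟩
  · right
    refine ⟨_, hTS _ (hTm u hu).1, _, hdS v hv, ?_, ?_, ?_, ?_⟩
    · intro hh
      exact hdv v hv (by simpa using hv0) _ (Finset.mem_insert_of_mem hh) rfl
    · intro p hp
      obtain ⟨h2, _⟩ := hc _ (Finset.mem_image_of_mem hat hp)
      have h4 := hTm _ h2
      rw [hph u v p (hB p hp).2] at h4
      exact ⟨hTS _ h4.1, by rw [h4.2, (hTm u hu).2]⟩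
    · intro p hp
      have := hr1 _ (Finset.mem_image_of_mem hat hp)
      simpa only [hph u v p (hB p hp).2] using this
    · intro p hp q hq hpq
      have := hr2 _ (Finset.mem_image_of_mem hat hp) _ (Finset.mem_image_of_mem hat hq)
        (fun h => hpq (hat_inj h))
      simpa only [hph u v p (hB p hp).2, hph u v q (hB q hq).2] using this

theorem canN : ∀ (w : ℕ →₀ ℕ) (R : Type) [CommRing R] [IsDomain R] [CharZero R]
    (B : Finset R[X]), Good B → wt B = w → CanN R B := by
  classical
  intro w
  induction w using wlt_wf.induction with
  | _ w ih =>
    intro R _ _ _ B hB hw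
    refine step2 hB (step1 (hat_good hB) fun B' hB' hlt => ?_)
    rw [hat_wt, hw] at hlt
    exact ih _ hlt R[X] B' hB' rfl

end CPV

/-- **Theorem 4.2 (strengthened canonical polynomial Van der Waerden).**
Let `h, k, k', m, n ∈ ℕ`, let `𝒜 = {p 1, ..., p k}` be a set of integral
polynomials and `ℬ = {p' 1, ..., p' k'}` a set of pairwise distinct nonzero
integral polynomials.  Then there exists `N` such that for every
`(m, n)`-type colouring `Δ` of `{1, ..., N}` one of the following holds:
(i) there exist `a ∈ ℤ` and `d ≠ 0` with
`{a, a + p 1 d, ..., a + p k d} ⊆ {1, ..., N}` monochromatic, i.e. some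
coordinate `j ∈ {1, ..., m}` of `Δ` is constant on the set; or
(ii) there exist `a' ∈ ℤ` and `d' > h` with
`{a', a' + p' 1 d', ..., a' + p' k' d'} ⊆ {1, ..., N}` fully-rainbow, i.e. its
elements are pairwise distinct, for any two distinct elements `x, y` and
coordinates `j, j' ≤ m` one has `Δ_j x ≠ Δ_{j'} y`, and the last coordinate
`Δ_{m+1}` is constant on the set. -/
theorem strengthened_canonical_polynomial_vdw
    (h : ℕ) {k k' : ℕ} (m n : ℕ)
    (p : Fin k → Polynomial ℤ) (hp0 : ∀ i, (p i).eval 0 = 0)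
    (p' : Fin k' → Polynomial ℤ) (hp'0 : ∀ i, (p' i).eval 0 = 0)
    (hp'ne : ∀ i, p' i ≠ 0) (hp'dist : ∀ i j, i ≠ j → p' i ≠ p' j) :
    ∃ N : ℕ, ∀ Δ : ℤ → (Fin m → ℕ) × Fin n,
      (∃ a d : ℤ, d ≠ 0 ∧
        a ∈ Set.Icc (1 : ℤ) (N : ℤ) ∧
        (∀ i : Fin k, a + (p i).eval d ∈ Set.Icc (1 : ℤ) (N : ℤ)) ∧
        (∃ j : Fin m, ∀ i : Fin k, (Δ (a + (p i).eval d)).1 j = (Δ a).1 j)) ∨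
      (∃ a' d' : ℤ, (h : ℤ) < d' ∧
        a' ∈ Set.Icc (1 : ℤ) (N : ℤ) ∧
        (∀ i : Fin k', a' + (p' i).eval d' ∈ Set.Icc (1 : ℤ) (N : ℤ)) ∧
        (Function.Injective fun i : Fin k' => a' + (p' i).eval d') ∧
        (∀ i : Fin k', a' + (p' i).eval d' ≠ a') ∧
        (∀ i i' : Fin k', i ≠ i' → ∀ j j' : Fin m,
          (Δ (a' + (p' i).eval d')).1 j ≠ (Δ (a' + (p' i').eval d')).1 j') ∧
        (∀ i : Fin k', ∀ j j' : Fin m,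
          (Δ (a' + (p' i).eval d')).1 j ≠ (Δ a').1 j') ∧
        (∀ i : Fin k', (Δ (a' + (p' i).eval d')).2 = (Δ a').2)) := by
  classical
  set f : Fin k' → Polynomial ℤ := fun i => (p' i).comp (Polynomial.X ^ 2) with hf
  have hfe : ∀ i d, (f i).eval d = (p' i).eval (d ^ 2) := by
    intro i d; simp [hf]
  have hdeg : (Polynomial.X ^ 2 : Polynomial ℤ).natDegree ≠ 0 := by simp
  have hcomp : ∀ q : Polynomial ℤ, q.comp (Polynomial.X ^ 2) = 0 → q = 0 := by
    intro q hq
    have := Polynomial.leadingCoeff_comp (p := q) hdeg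
    rw [hq] at this
    exact Polynomial.leadingCoeff_eq_zero.1 (by simpa using this.symm)
  have hfne : ∀ i, f i ≠ 0 := fun i h0 => hp'ne i (hcomp _ h0)
  have hfinj : ∀ i j, i ≠ j → f i - f j ≠ 0 := by
    intro i j hij h0
    refine hp'dist i j hij (sub_eq_zero.1 (hcomp _ ?_))
    rw [Polynomial.sub_comp]; exact h0
  have hgood : CPV.Good (Finset.univ.image f) := by
    intro q hq
    obtain ⟨i, _, rfl⟩ := Finset.mem_image.1 hq
    exact ⟨hfne i, by rw [hfe]; simpa using hp'0 i⟩
  obtain ⟨S, hS⟩ := CPV.canN _ ℤ _ hgood rfl (Fin m) (Fin n) (Finset.univ.image p) (by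
    intro q hq
    obtain ⟨i, _, rfl⟩ := Finset.mem_image.1 hq
    exact hp0 i)
    (Finset.Icc (-(h : ℤ)) h ∪ Finset.univ.biUnion (fun i => (f i).roots.toFinset) ∪
      Finset.univ.biUnion (fun i => Finset.univ.biUnion fun j => (f i - f j).roots.toFinset))
  set M : ℕ := ∑ x ∈ S, x.natAbs with hM
  have hSM : ∀ x ∈ S, x + (M + 1) ∈ Set.Icc (1 : ℤ) ((2 * M + 1 : ℕ) : ℤ) := by
    intro x hx
    have : x.natAbs ≤ M := Finset.single_le_sum (f := Int.natAbs) (fun _ _ => Nat.zero_le _) hx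
    constructor <;> push_cast <;> omega
  refine ⟨2 * M + 1, fun Δ => ?_⟩
  have hsh : ∀ a b : ℤ, a + (M + 1) + b = a + b + (M + 1) := fun a b => by ring
  rcases hS (fun x => (Δ (x + (M + 1))).1) (fun x => (Δ (x + (M + 1))).2) with
    ⟨a, ha, d, hd, hd0, j, hj⟩ | ⟨a, ha, d, hd, hdH, hc, hr1, hr2⟩
  · left
    have hj' := fun i => hj (p i) (Finset.mem_image_of_mem _ (Finset.mem_univ i))
    refine ⟨a + (M + 1), d, hd0, hSM a ha, fun i => ?_, j, fun i => ?_⟩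
    · rw [hsh]; exact hSM _ (hj' i).1
    · rw [hsh]; exact (hj' i).2
  · right
    have hm : ∀ i, f i ∈ Finset.univ.image f :=
      fun i => Finset.mem_image_of_mem _ (Finset.mem_univ i)
    simp only [Finset.mem_union, not_or, Finset.mem_Icc, Finset.mem_biUnion, Finset.mem_univ,
      true_and, not_exists, Multiset.mem_toFinset] at hdH
    obtain ⟨⟨hd1, hd2⟩, hd3⟩ := hdH
    have hne : ∀ i j, i ≠ j → (p' i).eval (d ^ 2) ≠ (p' j).eval (d ^ 2) := by
      intro i j hij he
      refine hd3 i j ((Polynomial.mem_roots (hfinj i j hij)).2 ?_)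
      simp [Polynomial.IsRoot.def, hfe, he]
    refine ⟨a + (M + 1), d ^ 2, ?_, hSM a ha, fun i => ?_, fun i j hij => ?_, fun i => ?_,
      fun i i' hii j j' => ?_, fun i j j' => ?_, fun i => ?_⟩
    · by_contra hle
      refine hd1 (abs_le.1 (abs_le_of_sq_le_sq ?_ (by positivity)))
      nlinarith [Int.natCast_nonneg h, sq_nonneg d]
    · rw [hsh, ← hfe]; exact hSM _ (hc _ (hm i)).1
    · by_contra hne'
      exact hne i j hne' (by simpa using hij)
    · intro he
      refine hd2 i ((Polynomial.mem_roots (hfne i)).2 ?_)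
      rw [Polynomial.IsRoot.def, hfe]
      simpa using he
    · rw [hsh, hsh, ← hfe, ← hfe]
      refine hr2 _ (hm i) _ (hm i') (fun he => hfinj i i' hii (sub_eq_zero.2 he)) j j'
    · rw [hsh, ← hfe]; exact hr1 _ (hm i) j j'
    · rw [hsh, ← hfe]; exact (hc _ (hm i)).2
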